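/- For every ℓ ≥ 2 and k ≥ 2, the conformal algebra R_{k×k,ℓ} is generated by its subspace of minimal weight ℓ, namely by X^{(ℓ)} = span{u(0,ℓ-1) : u ∈ A}: R_{k×k,ℓ} equals the span of all iterated products u¹⁽ⁿ¹⁾(u²⁽ⁿ²⁾(⋯(uˢ⁽ⁿˢ⁾v)⋯)) with s ∈ ℕ, u¹,…,uˢ, v ∈ X^{(ℓ)}, and n₁,…,nₛ ∈ ℕ. -/

import Mathlib

/-- The carrier of `R_{k×k} = M_k(F) ⊗ F[t₁,t₂]`: the element `u(m,n) = u ⊗ t₁^m t₂^n`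
is encoded as `Finsupp.single (m, n) u`. -/
abbrev MatCarrier (F : Type*) [Field F] (k : ℕ) :=
  (ℕ × ℕ) →₀ Matrix (Fin k) (Fin k) F

/-- The operator `∂` on `R_{k×k}`:
`∂(u(m,n)) = (m+1)·u(m+1,n) + (n+1)·u(m,n+1)`. -/
noncomputable def mD (F : Type*) [Field F] (k : ℕ) :
    MatCarrier F k → MatCarrier F k :=
  fun f => f.sum fun p u =>
    (((p.1 + 1 : ℕ) : F)) • Finsupp.single (p.1 + 1, p.2) u +
    (((p.2 + 1 : ℕ) : F)) • Finsupp.single (p.1, p.2 + 1) u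

/-- The `s`-th product on `R_{k×k}`: the coefficient of `z^{-s-1}` in
`Y⁺(u(m₁,m₂),z)(v(n₁,n₂)) =
  binom(-n₁-1,m₂)·Σ_p binom(p,m₁)·(uv)(p,n₂)·z^{p-m₁-m₂-n₁-1}
  - binom(-n₂-1,m₁)·Σ_q binom(q,m₂)·(vu)(n₁,q)·z^{q-m₁-m₂-n₂-1}`,
extended bilinearly, where `binom(-a-1,b) = (-1)^b·binom(a+b,b)`. -/
noncomputable def mProd (F : Type*) [Field F] (k : ℕ) (s : ℕ)
    (f g : MatCarrier F k) : MatCarrier F k :=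
  f.sum fun p u => g.sum fun q v =>
    (if s ≤ p.1 + p.2 + q.1 then
      ((-1 : F) ^ p.2 * ((q.1 + p.2).choose p.2 : F) *
        ((p.1 + p.2 + q.1 - s).choose p.1 : F)) •
        Finsupp.single (p.1 + p.2 + q.1 - s, q.2) (u * v)
     else 0) -
    (if s ≤ p.1 + p.2 + q.2 then
      ((-1 : F) ^ p.1 * ((q.2 + p.1).choose p.1 : F) *
        ((p.1 + p.2 + q.2 - s).choose p.2 : F)) •
        Finsupp.single (q.1, p.1 + p.2 + q.2 - s) (v * u)
     else 0)

/-- The weight space `R_{k×k}^{(n)} = span{u(m₁,m₂) : m₁ + m₂ + 1 = n}`. -/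
noncomputable def mWeight (F : Type*) [Field F] (k : ℕ) (n : ℕ) :
    Submodule F (MatCarrier F k) :=
  Submodule.span F {x | ∃ (u : Matrix (Fin k) (Fin k) F) (m₁ m₂ : ℕ),
    m₁ + m₂ + 1 = n ∧ x = Finsupp.single (m₁, m₂) u}

/-- The subspace `R_{k×k,ℓ} = span{u(m, n+ℓ-1) : u ∈ A, m, n ∈ ℕ}` (`ℓ ≥ 1`). -/
noncomputable def Rkkl (F : Type*) [Field F] (k ℓ : ℕ) :
    Submodule F (MatCarrier F k) :=
  Submodule.span F {x | ∃ (u : Matrix (Fin k) (Fin k) F) (m n : ℕ),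
    x = Finsupp.single (m, n + ℓ - 1) u}

/-- Iterated products `u¹⁽ⁿ¹⁾(u²⁽ⁿ²⁾(⋯(uˢ⁽ⁿˢ⁾v)⋯))` with all `uⁱ, v` in `S`
(the case `s = 0` being `v` itself). -/
inductive IterProd {R : Type*} (P : ℕ → R → R → R) (S : Set R) : R → Prop
  | base : ∀ v ∈ S, IterProd P S v
  | step : ∀ u ∈ S, ∀ (n : ℕ) (w : R), IterProd P S w → IterProd P S (P n u w)


theorem mProd_single (F : Type*) [Field F] (k s L a b : ℕ) (u v : Matrix (Fin k) (Fin k) F) :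
    mProd F k s (Finsupp.single (0, L) u) (Finsupp.single (a, b) v) =
    (if s ≤ L + a then
      ((-1 : F) ^ L * ((a + L).choose L : F)) • Finsupp.single (L + a - s, b) (u * v)
     else 0) -
    (if s ≤ L + b then
      ((L + b - s).choose L : F) • Finsupp.single (a, L + b - s) (v * u)
     else 0) := by
  unfold mProd
  rw [Finsupp.sum_single_index, Finsupp.sum_single_index]
  · simp
  · simp
  · simp [Finsupp.sum]

theorem single_mem_Rkkl (F : Type*) [Field F] (k ℓ m n : ℕ) (hn : ℓ - 1 ≤ n) (hℓ : 2 ≤ ℓ)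
    (u : Matrix (Fin k) (Fin k) F) : Finsupp.single (m, n) u ∈ Rkkl F k ℓ := by
  apply Submodule.subset_span
  refine ⟨u, m, n - (ℓ - 1), ?_⟩
  congr 2
  omega

theorem support_of_mem_Rkkl (F : Type*) [Field F] (k ℓ : ℕ)
    (x : MatCarrier F k) (hx : x ∈ Rkkl F k ℓ) : ∀ p ∈ x.support, ℓ - 1 ≤ p.2 := by
  have h : ∀ p : ℕ × ℕ, p.2 < ℓ - 1 → x p = 0 := by
    unfold Rkkl at hx
    induction hx using Submodule.span_induction with
    | mem x h =>
      obtain ⟨u, m, n, rfl⟩ := h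
      intro p hp
      rw [Finsupp.single_apply, if_neg]
      rintro rfl
      simp only at hp
      omega
    | zero => simp
    | add x y _ _ h1 h2 => intro p hp; simp [h1 p hp, h2 p hp]
    | smul c x _ h1 => intro p hp; simp [h1 p hp]
  intro p hp
  by_contra hlt
  exact (Finsupp.mem_support_iff.mp hp) (h p (by omega))

theorem mProd_mem_Rkkl (F : Type*) [Field F] (k ℓ s : ℕ) (hℓ : 2 ≤ ℓ)
    (u : Matrix (Fin k) (Fin k) F) (x : MatCarrier F k) (hx : x ∈ Rkkl F k ℓ) :
    mProd F k s (Finsupp.single (0, ℓ - 1) u) x ∈ Rkkl F k ℓ := by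
  unfold mProd
  rw [Finsupp.sum_single_index]
  · refine Submodule.sum_mem _ fun q hq => ?_
    have hb := support_of_mem_Rkkl F k ℓ x hx q hq
    refine Submodule.sub_mem _ ?_ ?_
    · split_ifs
      · exact Submodule.smul_mem _ _ (single_mem_Rkkl F k ℓ _ _ hb hℓ _)
      · exact Submodule.zero_mem _
    · split_ifs
      · by_cases h : ℓ - 1 ≤ 0 + (ℓ - 1) + q.2 - s
        · exact Submodule.smul_mem _ _ (single_mem_Rkkl F k ℓ _ _ h hℓ _)
        · simp only
          rw [Nat.choose_eq_zero_of_lt (not_le.mp h)]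
          simp
      · exact Submodule.zero_mem _
  · simp [Finsupp.sum]

section gen
variable (F : Type*) [Field F] (k L : ℕ)

/-- Iterated products of the generators `u(0,L)`. -/
def Gen (x : MatCarrier F k) : Prop :=
  IterProd (mProd F k) {y : MatCarrier F k | ∃ u : Matrix (Fin k) (Fin k) F,
          y = Finsupp.single ((0 : ℕ), L) u} x

theorem Gen.step {x : MatCarrier F k} (h : Gen F k L x) (s : ℕ) (u : Matrix (Fin k) (Fin k) F) :
    Gen F k L (mProd F k s (Finsupp.single (0, L) u) x) :=
  by unfold Gen at *; exact IterProd.step (P := mProd F k) (Finsupp.single ((0 : ℕ), L) u) (by exact ⟨u, rfl⟩) s x h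

theorem gen_row [CharZero F] (hL : 1 ≤ L) (i j : Fin k) (hij : i ≠ j) (c : F) (a : ℕ) :
    Gen F k L (Finsupp.single (a, L) (Matrix.single i j c)) := by
  induction a with
  | zero => exact IterProd.base _ ⟨_, rfl⟩
  | succ a ih =>
    have hc : ((-1 : F) ^ L * ((a + L).choose L : F)) ≠ 0 :=
      mul_ne_zero (pow_ne_zero _ (by simp))
        (Nat.cast_ne_zero.mpr (Nat.choose_pos (by omega)).ne')
    have h := ih.step F k L (L - 1)
      (Matrix.single i i ((-1 : F) ^ L * ((a + L).choose L : F))⁻¹)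
    rw [mProd_single, if_pos (by omega), Matrix.single_mul_single_same,
      Matrix.single_mul_single_of_ne _ _ _ _ hij.symm, Finsupp.smul_single, Matrix.smul_single,
      smul_eq_mul, mul_inv_cancel_left₀ hc, show L + a - (L - 1) = a + 1 by omega] at h
    simpa using h

theorem gen_off [CharZero F] (hL : 1 ≤ L) (i j : Fin k) (hij : i ≠ j) (c : F) (a n : ℕ) :
    Gen F k L (Finsupp.single (a, L + n) (Matrix.single i j c)) := by
  induction n with
  | zero => exact gen_row F k L hL i j hij c a
  | succ n ih =>
    have hc : (-((L + n + 1).choose L : F)) ≠ 0 :=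
      neg_ne_zero.mpr (Nat.cast_ne_zero.mpr (Nat.choose_pos (by omega)).ne')
    have h := ih.step F k L (L - 1)
      (Matrix.single j j (-((L + n + 1).choose L : F))⁻¹)
    rw [mProd_single, if_pos (by omega), if_pos (by omega), Matrix.single_mul_single_same,
      Matrix.single_mul_single_of_ne _ _ _ _ hij.symm,
      show L + (L + n) - (L - 1) = L + n + 1 by omega, Finsupp.single_zero, smul_zero, zero_sub,
      ← neg_smul, Finsupp.smul_single, Matrix.smul_single,
      smul_eq_mul, mul_comm c, mul_inv_cancel_left₀ hc] at h
    exact h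

theorem gen_all [CharZero F] (hk : 2 ≤ k) (hL : 1 ≤ L) (i j : Fin k) (c : F) (a n : ℕ) :
    Gen F k L (Finsupp.single (a, L + n) (Matrix.single i j c)) := by
  by_cases hij : i ≠ j
  · exact gen_off F k L hL i j hij c a n
  · obtain rfl : i = j := not_not.mp hij
    have : Nontrivial (Fin k) := Fin.nontrivial_iff_two_le.mpr hk
    obtain ⟨j, hj⟩ := exists_ne i
    have ih := gen_off F k L hL j i hj c (a + (L + n) + 1) n
    have hc : ((-1 : F) ^ L * ((a + (L + n) + 1 + L).choose L : F)) ≠ 0 :=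
      mul_ne_zero (pow_ne_zero _ (by simp))
        (Nat.cast_ne_zero.mpr (Nat.choose_pos (by omega)).ne')
    have h := ih.step F k L (L + (L + n) + 1)
      (Matrix.single i j ((-1 : F) ^ L * ((a + (L + n) + 1 + L).choose L : F))⁻¹)
    rw [mProd_single, if_pos (by omega), if_neg (by omega), Matrix.single_mul_single_same,
      Finsupp.smul_single, Matrix.smul_single,
      smul_eq_mul, mul_inv_cancel_left₀ hc, sub_zero,
      show L + (a + (L + n) + 1) - (L + (L + n) + 1) = a by omega] at h
    exact h

end gen

/-- **Theorem 4.2** (for `R_{k×k,ℓ}`): for `ℓ ≥ 2` and `k ≥ 2`, the conformal algebra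
`R_{k×k,ℓ}` is generated by its subspace of minimal weight `ℓ`, namely by
`X^{(ℓ)} = span{u(0,ℓ-1) : u ∈ A} = {u(0,ℓ-1) : u ∈ A}`. -/
theorem Rkkl_generated_by_minimal_weight (F : Type*) [Field F] [CharZero F]
    (k ℓ : ℕ) (hk : 2 ≤ k) (hℓ : 2 ≤ ℓ) :
    Submodule.span F {x : MatCarrier F k |
      IterProd (mProd F k)
        {y : MatCarrier F k | ∃ u : Matrix (Fin k) (Fin k) F,
          y = Finsupp.single ((0 : ℕ), ℓ - 1) u} x}
      = Rkkl F k ℓ := by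
  apply le_antisymm
  · rw [Submodule.span_le]
    intro x hx
    simp only [Set.mem_ofPred_eq] at hx
    induction hx with
    | base v hv =>
      obtain ⟨u, rfl⟩ := hv
      exact single_mem_Rkkl F k ℓ _ _ le_rfl hℓ u
    | step u hu n w _ ih =>
      obtain ⟨u, rfl⟩ := hu
      exact mProd_mem_Rkkl F k ℓ n hℓ u w ih
  · unfold Rkkl
    rw [Submodule.span_le]
    rintro x ⟨u, m, n, rfl⟩
    rw [SetLike.mem_coe, Matrix.matrix_eq_sum_single u, show n + ℓ - 1 = (ℓ - 1) + n by omega,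
      Finsupp.single_finsetSum]
    refine Submodule.sum_mem _ fun i _ => ?_
    rw [Finsupp.single_finsetSum]
    refine Submodule.sum_mem _ fun j _ => ?_
    exact Submodule.subset_span (gen_all F k (ℓ - 1) hk (by omega) i j _ m n)
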